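/- Fix an integer n ≥ 1 and a real number λ ≥ 1. Consider the set PF(n, λ) of pairs (m, M) where 1 ≤ m ≤ n and M is an m×m matrix with natural number entries which is irreducible and for which there exist a real number μ ≤ λ and a vector x ∈ ℝ^m with all coordinates nonnegative, x ≠ 0, and M x = μ x. Then PF(n, λ) is a finite set of cardinality at most n·(n·λ^{n+1} + 1)^{n²}. In particular, for fixed n this bound is polynomial in λ. -/

import Mathlib

/-- An `m × m` matrix with natural number entries is *irreducible* if for all indices
`i, j` there exists `k ≥ 1` such that the `(i,j)` entry of `M ^ k` is nonzero. -/
def Matrix.NatIrreducible {m : ℕ} (M : Matrix (Fin m) (Fin m) ℕ) : Prop :=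
  ∀ i j : Fin m, ∃ k : ℕ, 1 ≤ k ∧ (M ^ k) i j ≠ 0

/-- `PF n lam` is the set of (sizes together with) square irreducible matrices with
natural number entries, of size `m` with `1 ≤ m ≤ n`, admitting a nonnegative nonzero
real eigenvector with eigenvalue `μ ≤ lam`. -/
def PF (n : ℕ) (lam : ℝ) : Set (Σ m : ℕ, Matrix (Fin m) (Fin m) ℕ) :=
  { p | 1 ≤ p.1 ∧ p.1 ≤ n ∧ p.2.NatIrreducible ∧
      ∃ (μ : ℝ) (x : Fin p.1 → ℝ), μ ≤ lam ∧ (∀ i, 0 ≤ x i) ∧ x ≠ 0 ∧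
        (p.2.map (fun a : ℕ => (a : ℝ))).mulVec x = μ • x }

/-!
Let `M x = μ x` with `M` irreducible and `x ≥ 0` nonzero, so that
`(M ^ k) i j * x j ≤ μ ^ k * x i` for all `k`. As nonzero entries of `M ^ k` are at least `1`,
irreducibility makes `x` positive, and a closed walk then gives `1 ≤ μ`. By Cayley–Hamilton every
`M ^ k` lies in the span of `1, M, …, M ^ (m - 1)`, so some walk of length `l < m` leads from `j`
to `i`; closing it up by the edges from `i` to `j` gives
`M i j ≤ (M ^ (l + 1)) j j ≤ μ ^ (l + 1) ≤ μ ^ m`. It remains to count the matrices with entries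
at most `lam ^ n`.
-/

open Finset Matrix Polynomial

section Powers

variable {ι R : Type*} [Fintype ι] [DecidableEq ι]

lemma exists_lt_card_pow_apply_ne_zero [CommRing R] {A : Matrix ι ι R} {i j : ι} {k : ℕ}
    (hk : (A ^ k) i j ≠ 0) : ∃ l < Fintype.card ι, (A ^ l) i j ≠ 0 := by
  have : Nontrivial R := nontrivial_of_ne _ _ hk
  by_contra! hzero
  have hdeg : (X ^ k %ₘ A.charpoly).degree < Fintype.card ι :=
    (degree_modByMonic_lt _ A.charpoly_monic).trans_eq A.charpoly_degree_eq_dim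
  refine hk ?_
  rw [A.pow_eq_aeval_mod_charpoly, aeval_eq_sum_range, Matrix.sum_apply]
  refine sum_eq_zero fun l _ ↦ ?_
  rw [Matrix.smul_apply]
  by_cases hl : l < Fintype.card ι
  · rw [hzero l hl, smul_zero]
  · rw [coeff_eq_zero_of_degree_lt (hdeg.trans_le (by exact_mod_cast not_lt.mp hl)), zero_smul]

lemma pow_mulVec_eq_pow_smul [CommSemiring R] {A : Matrix ι ι R} {x : ι → R} {μ : R}
    (hAx : A *ᵥ x = μ • x) (k : ℕ) : A ^ k *ᵥ x = μ ^ k • x := by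
  induction k with
  | zero => simp
  | succ k ih => rw [pow_succ, ← mulVec_mulVec, hAx, mulVec_smul, ih, smul_smul, pow_succ']

lemma map_natCast_pow [Semiring R] (M : Matrix ι ι ℕ) (k : ℕ) :
    M.map (Nat.cast : ℕ → R) ^ k = (M ^ k).map (Nat.cast : ℕ → R) :=
  (map_pow (Nat.castRingHom R).mapMatrix M k).symm

end Powers

section NonnegEigenvector

variable {ι R : Type*} [Fintype ι] [DecidableEq ι]
  [CommSemiring R] [PartialOrder R] [IsOrderedRing R]
  {M : Matrix ι ι ℕ} {x : ι → R} {μ : R}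

lemma natCast_pow_apply_mul_le (hx : ∀ i, 0 ≤ x i) (hMx : M.map (Nat.cast : ℕ → R) *ᵥ x = μ • x)
    (k : ℕ) (i j : ι) : ((M ^ k) i j : R) * x j ≤ μ ^ k * x i := calc
  ((M ^ k) i j : R) * x j ≤ ∑ l, ((M ^ k) i l : R) * x l :=
    single_le_sum (f := fun l ↦ ((M ^ k) i l : R) * x l)
      (fun l _ ↦ mul_nonneg (Nat.cast_nonneg _) (hx l)) (mem_univ j)
  _ = ((M.map (Nat.cast : ℕ → R)) ^ k *ᵥ x) i := by rw [map_natCast_pow]; rfl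
  _ = μ ^ k * x i := by rw [pow_mulVec_eq_pow_smul hMx]; rfl

lemma le_pow_mul_of_pow_apply_ne_zero (hx : ∀ i, 0 ≤ x i)
    (hMx : M.map (Nat.cast : ℕ → R) *ᵥ x = μ • x) {k : ℕ} {i j : ι} (hk : (M ^ k) i j ≠ 0) :
    x j ≤ μ ^ k * x i := by
  have hone : (1 : R) ≤ (M ^ k) i j := by
    simpa using Nat.mono_cast (α := R) (Nat.one_le_iff_ne_zero.mpr hk)
  exact (le_mul_of_one_le_left (hx j) hone).trans (natCast_pow_apply_mul_le hx hMx k i j)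

end NonnegEigenvector

namespace Matrix.NatIrreducible

variable {m : ℕ} {M : Matrix (Fin m) (Fin m) ℕ}

lemma exists_lt_pow_apply_ne_zero (hM : M.NatIrreducible) (i j : Fin m) :
    ∃ k < m, (M ^ k) i j ≠ 0 := by
  obtain ⟨k, -, hk⟩ := hM i j
  have hk_int : (M.map (Nat.cast : ℕ → ℤ) ^ k) i j ≠ 0 := by
    simpa only [map_natCast_pow, map_apply, Nat.cast_ne_zero] using hk
  simpa only [map_natCast_pow, map_apply, Nat.cast_ne_zero, Fintype.card_fin]
    using exists_lt_card_pow_apply_ne_zero hk_int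

variable {R : Type*} [CommSemiring R] {x : Fin m → R} {μ : R}

lemma eigenvector_pos [PartialOrder R] [IsOrderedRing R] (hM : M.NatIrreducible)
    (hx : ∀ i, 0 ≤ x i) (hx0 : x ≠ 0) (hMx : M.map (Nat.cast : ℕ → R) *ᵥ x = μ • x) (i : Fin m) :
    0 < x i := by
  obtain ⟨j, hj⟩ := Function.ne_iff.mp hx0
  obtain ⟨k, -, hk⟩ := hM i j
  refine (hx i).lt_of_ne' fun hi ↦ hj ((hx j).antisymm' ?_)
  simpa only [hi, mul_zero] using le_pow_mul_of_pow_apply_ne_zero hx hMx hk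

variable [LinearOrder R] [IsStrictOrderedRing R]

lemma one_le_eigenvalue (hM : M.NatIrreducible) (hx : ∀ i, 0 ≤ x i) (hx0 : x ≠ 0)
    (hMx : M.map (Nat.cast : ℕ → R) *ᵥ x = μ • x) : 1 ≤ μ := by
  obtain ⟨i, -⟩ := Function.ne_iff.mp hx0
  have hxi : 0 < x i := hM.eigenvector_pos hx hx0 hMx i
  have hμ : 0 ≤ μ := by
    refine nonneg_of_mul_nonneg_left (b := x i) ?_ hxi
    simpa only [pow_one] using (mul_nonneg (Nat.cast_nonneg _) hxi.le).trans
      (natCast_pow_apply_mul_le hx hMx 1 i i)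
  obtain ⟨k, hk_pos, hk⟩ := hM i i
  have hpow : 1 ≤ μ ^ k :=
    le_of_mul_le_mul_right ((one_mul _).trans_le (le_pow_mul_of_pow_apply_ne_zero hx hMx hk)) hxi
  exact (one_le_pow_iff_of_nonneg hμ (Nat.one_le_iff_ne_zero.mp hk_pos)).mp hpow

lemma apply_le_eigenvalue_pow (hM : M.NatIrreducible) (hx : ∀ i, 0 ≤ x i) (hx0 : x ≠ 0)
    (hMx : M.map (Nat.cast : ℕ → R) *ᵥ x = μ • x) (i j : Fin m) : (M i j : R) ≤ μ ^ m := by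
  have hμ : 1 ≤ μ := hM.one_le_eigenvalue hx hx0 hMx
  have hxj : 0 < x j := hM.eigenvector_pos hx hx0 hMx j
  obtain ⟨l, hl, hwalk⟩ := hM.exists_lt_pow_apply_ne_zero j i
  have hclosed : M i j ≤ (M ^ (l + 1)) j j := calc
    M i j ≤ (M ^ l) j i * M i j := Nat.le_mul_of_pos_left _ (Nat.pos_of_ne_zero hwalk)
    _ ≤ ∑ p, (M ^ l) j p * M p j :=
      single_le_sum (f := fun p ↦ (M ^ l) j p * M p j) (fun _ _ ↦ Nat.zero_le _) (mem_univ i)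
    _ = (M ^ (l + 1)) j j := by rw [pow_succ, mul_apply]
  calc (M i j : R) ≤ (M ^ (l + 1)) j j := Nat.mono_cast hclosed
    _ ≤ μ ^ (l + 1) := le_of_mul_le_mul_right (natCast_pow_apply_mul_le hx hMx (l + 1) j j) hxj
    _ ≤ μ ^ m := pow_le_pow_right₀ hμ hl

end Matrix.NatIrreducible

/-- The square matrices over `ℕ` of size between `1` and `n` with all entries at most `N`, paired
with their size as in `PF`; it serves as a finite box containing `PF n lam`. -/
def boundedMatrices (n N : ℕ) : Finset (Σ m : ℕ, Matrix (Fin m) (Fin m) ℕ) :=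
  (Icc 1 n).sigma fun m ↦
    Fintype.piFinset fun _ : Fin m ↦ Fintype.piFinset fun _ : Fin m ↦ Iic N

lemma mem_boundedMatrices {n N : ℕ} {p : Σ m : ℕ, Matrix (Fin m) (Fin m) ℕ} :
    p ∈ boundedMatrices n N ↔ (1 ≤ p.1 ∧ p.1 ≤ n) ∧ ∀ i j, p.2 i j ≤ N := by
  refine mem_sigma.trans (and_congr mem_Icc ?_)
  exact Fintype.mem_piFinset.trans
    (forall_congr' fun _ ↦ Fintype.mem_piFinset.trans (forall_congr' fun _ ↦ mem_Iic))

lemma card_boundedMatrices_le (n N : ℕ) : #(boundedMatrices n N) ≤ n * (N + 1) ^ n ^ 2 := calc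
  #(boundedMatrices n N) = ∑ m ∈ Icc 1 n, ((N + 1) ^ m) ^ m := by
    refine (card_sigma _ _).trans (sum_congr rfl fun m _ ↦ ?_)
    exact (Fintype.card_piFinset_const _ m).trans
      (by rw [Fintype.card_piFinset_const, Nat.card_Iic])
  _ ≤ ∑ _m ∈ Icc 1 n, (N + 1) ^ n ^ 2 := by
    refine sum_le_sum fun m hm ↦ ?_
    rw [← pow_mul, ← sq]
    gcongr
    · exact N.succ_pos
    · exact (mem_Icc.mp hm).2
  _ = n * (N + 1) ^ n ^ 2 := by simp

lemma PF_subset_boundedMatrices (n : ℕ) (lam : ℝ) : PF n lam ⊆ boundedMatrices n ⌊lam ^ n⌋₊ := by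
  rintro ⟨m, M⟩ ⟨hm, hmn, hM, μ, x, hμ, hx, hx0, hMx⟩
  refine mem_boundedMatrices.mpr ⟨⟨hm, hmn⟩, fun i j ↦ Nat.le_floor ?_⟩
  have hμ_one : 1 ≤ μ := hM.one_le_eigenvalue hx hx0 hMx
  calc (M i j : ℝ) ≤ μ ^ m := hM.apply_le_eigenvalue_pow hx hx0 hMx i j
    _ ≤ μ ^ n := pow_le_pow_right₀ hμ_one hmn
    _ ≤ lam ^ n := by gcongr

theorem PF_finite_card_le_general (n : ℕ) (lam : ℝ) :
    (PF n lam).Finite ∧ (PF n lam).ncard ≤ n * (⌊lam ^ n⌋₊ + 1) ^ n ^ 2 := by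
  have hsub := PF_subset_boundedMatrices n lam
  have hfin := (boundedMatrices n ⌊lam ^ n⌋₊).finite_toSet
  refine ⟨hfin.subset hsub, (Set.ncard_le_ncard hsub hfin).trans ?_⟩
  exact (Set.ncard_coe_finset _).trans_le (card_boundedMatrices_le _ _)

theorem PF_finite_card_le (n : ℕ) (hn : 1 ≤ n) (lam : ℝ) (hlam : 1 ≤ lam) :
    (PF n lam).Finite ∧
      ((PF n lam).ncard : ℝ) ≤ (n : ℝ) * ((n : ℝ) * lam ^ (n + 1) + 1) ^ (n ^ 2) := by
  obtain ⟨hfin, hcard⟩ := PF_finite_card_le_general n lam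
  refine ⟨hfin, ?_⟩
  have hfloor : (⌊lam ^ n⌋₊ : ℝ) ≤ n * lam ^ (n + 1) := calc
    (⌊lam ^ n⌋₊ : ℝ) ≤ lam ^ n := Nat.floor_le (by positivity)
    _ ≤ lam ^ (n + 1) := pow_le_pow_right₀ hlam n.le_succ
    _ ≤ n * lam ^ (n + 1) := le_mul_of_one_le_left (by positivity) (by exact_mod_cast hn)
  calc ((PF n lam).ncard : ℝ) ≤ n * (⌊lam ^ n⌋₊ + 1) ^ n ^ 2 := by exact_mod_cast hcard
    _ ≤ n * (n * lam ^ (n + 1) + 1) ^ n ^ 2 := by gcongr
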